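/- (Meyers–Ziemer inequality.) Let μ be a positive Radon measure on ℝⁿ satisfying K(μ) := sup{ μ(B_r(x))/r^{n−1} : x ∈ ℝⁿ, r > 0 } < ∞. Then there exists a constant c(n), depending only on n, such that | ∫_{ℝⁿ} φ dμ | ≤ c(n) K(μ) ∫_{ℝⁿ} |∇φ| dx for every φ ∈ C¹_c(ℝⁿ). -/

import Mathlib

open Set MeasureTheory Metric Real
open scoped RealInnerProductSpace ENNReal NNReal

noncomputable section

variable {n : ℕ}

/-- The Laplacian as the sum of second partial derivatives. -/
def lapl (f : EuclideanSpace ℝ (Fin n) → ℝ) (x : EuclideanSpace ℝ (Fin n)) : ℝ :=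
  ∑ i : Fin n,
    fderiv ℝ (fun y => fderiv ℝ f y (EuclideanSpace.single i 1)) x (EuclideanSpace.single i 1)

/-- Double-well potential. -/
structure DoubleWell (W : ℝ → ℝ) (γ α κ : ℝ) : Prop where
  smooth : ContDiff ℝ 3 W
  nonneg : ∀ s, 0 ≤ W s
  zero_iff : ∀ s, W s = 0 ↔ s = 1 ∨ s = -1
  deriv_one : deriv W 1 = 0
  deriv_neg_one : deriv W (-1) = 0
  γ_mem : γ ∈ Set.Ioo (-1 : ℝ) 1
  deriv_pos : ∀ s, -1 < s → s < γ → 0 < deriv W s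
  deriv_neg : ∀ s, γ < s → s < 1 → deriv W s < 0
  α_mem : α ∈ Set.Ioo (0 : ℝ) 1
  κ_pos : 0 < κ
  conv : ∀ s : ℝ, α ≤ |s| → κ ≤ deriv (deriv W) s

/-- The diffused interface energy measure. -/
def phaseMeasure (W : ℝ → ℝ) (ε : ℝ) (φ : EuclideanSpace ℝ (Fin n) → ℝ → ℝ) (t : ℝ) :
    Measure (EuclideanSpace ℝ (Fin n)) :=
  volume.withDensity fun x =>
    ENNReal.ofReal (ε * ‖gradient (fun y => φ y t) x‖ ^ 2 / 2 + W (φ x t) / ε)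

/-- Standing hypotheses: the Allen–Cahn equation with transport term, with regularity
and pointwise bounds. -/
structure StandingHyp (W : ℝ → ℝ) (Ω : Set (EuclideanSpace ℝ (Fin n)))
    (T ε β : ℝ) (φ : EuclideanSpace ℝ (Fin n) → ℝ → ℝ)
    (u : EuclideanSpace ℝ (Fin n) → ℝ → EuclideanSpace ℝ (Fin n)) : Prop where
  ε_pos : 0 < ε
  ε_lt_one : ε < 1
  T_pos : 0 < T
  u_smooth : ContDiff ℝ (⊤ : ℕ∞) fun p : EuclideanSpace ℝ (Fin n) × ℝ => u p.1 p.2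
  φ_space_reg : ∀ j : Fin 4, Continuous fun p : EuclideanSpace ℝ (Fin n) × ℝ =>
    iteratedFDeriv ℝ (j : ℕ) (fun y => φ y p.2) p.1
  φ_time_reg : Continuous fun p : EuclideanSpace ℝ (Fin n) × ℝ => deriv (φ p.1) p.2
  φ_time_grad_reg : Continuous fun p : EuclideanSpace ℝ (Fin n) × ℝ =>
    deriv (fun s => gradient (fun y => φ y s) p.1) p.2
  pde : ∀ x ∈ Ω, ∀ t ∈ Icc (0 : ℝ) T,
    deriv (φ x) t + ⟪u x t, gradient (fun y => φ y t) x⟫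
      = lapl (fun y => φ y t) x - deriv W (φ x t) / ε ^ 2
  φ_bound : ∀ x ∈ Ω, ∀ t ∈ Icc (0 : ℝ) T, |φ x t| ≤ 1
  u_bound : ∀ x ∈ Ω, ∀ t ∈ Icc (0 : ℝ) T, ‖u x t‖ ≤ ε ^ (-β)
  Du_bound : ∀ x ∈ Ω, ∀ t ∈ Icc (0 : ℝ) T, ‖fderiv ℝ (fun y => u y t) x‖ ≤ ε ^ (-(β + 1))

/-- The truncated backward heat kernel. -/
def heatKer (η : EuclideanSpace ℝ (Fin n) → ℝ) (y : EuclideanSpace ℝ (Fin n)) (s : ℝ)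
    (x : EuclideanSpace ℝ (Fin n)) (t : ℝ) : ℝ :=
  (4 * π * (s - t)) ^ (-((n : ℝ) - 1) / 2) * Real.exp (-‖x - y‖ ^ 2 / (4 * (s - t))) * η (x - y)

/-- Cutoff: smooth, compactly supported in `B_d(0)`, `1` on `B_{d/2}(0)`, between 0 and 1. -/
structure IsCutoff (η : EuclideanSpace ℝ (Fin n) → ℝ) (d : ℝ) : Prop where
  smooth : ContDiff ℝ (⊤ : ℕ∞) η
  supp : tsupport η ⊆ ball (0 : EuclideanSpace ℝ (Fin n)) d
  eq_one : ∀ x ∈ closedBall (0 : EuclideanSpace ℝ (Fin n)) (d / 2), η x = 1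
  nonneg : ∀ x, 0 ≤ η x
  le_one : ∀ x, η x ≤ 1

/-- The `W^{1,p}` norm of a vector field on `Ω`. -/
def W1pNorm (p : ℝ) (Ω : Set (EuclideanSpace ℝ (Fin n)))
    (v : EuclideanSpace ℝ (Fin n) → EuclideanSpace ℝ (Fin n)) : ℝ :=
  (∫ x in Ω, (‖v x‖ ^ p + ‖fderiv ℝ v x‖ ^ p)) ^ (1 / p)

/-- The `L^q([a,b]; W^{1,p}(Ω))` norm of a time dependent vector field. -/
def LqW1pNorm (q p a b : ℝ) (Ω : Set (EuclideanSpace ℝ (Fin n)))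
    (u : EuclideanSpace ℝ (Fin n) → ℝ → EuclideanSpace ℝ (Fin n)) : ℝ :=
  (∫ t in Icc a b, (W1pNorm p Ω fun x => u x t) ^ q) ^ (1 / q)

/-- The supremum of density ratios over balls centred in `B_{1/4}` with radius in `(0,1/4]`. -/
def densRatioSup (μ : ℝ → Measure (EuclideanSpace ℝ (Fin n))) (t : ℝ) : ℝ :=
  ⨆ (y : EuclideanSpace ℝ (Fin n)) (_ : y ∈ closedBall (0 : EuclideanSpace ℝ (Fin n)) (1 / 4))
    (r : ℝ) (_ : r ∈ Ioc (0 : ℝ) (1 / 4)), (μ t (closedBall y r)).toReal / r ^ (n - 1)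



section MZ

set_option linter.unusedSectionVars false

variable {E : Type*} [NormedAddCommGroup E] [NormedSpace ℝ E] [FiniteDimensional ℝ E]
  [MeasurableSpace E] [BorelSpace E] (ν : Measure E) [ν.IsAddHaarMeasure]

/-- Increment bounded by the integral of the derivative along a segment. -/
lemma mz_segment {F : E → ℝ} (hF : ContDiff ℝ 1 F) (y w : E) :
    ‖F (y + w) - F y‖ₑ ≤ ∫⁻ s in Icc (0:ℝ) 1, ‖w‖ₑ * ‖fderiv ℝ F (y + s • w)‖ₑ := by
  have hc : Continuous (fderiv ℝ F) := hF.continuous_fderiv (by norm_num)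
  have hd : ∀ s : ℝ, HasDerivAt (fun s : ℝ => F (y + s • w)) (fderiv ℝ F (y + s • w) w) s := by
    intro s
    have h1 : HasDerivAt (fun s : ℝ => y + s • w) w s := by
      simpa using ((hasDerivAt_id s).smul_const w).const_add y
    exact ((hF.differentiable (by norm_num)) (y + s • w)).hasFDerivAt.comp_hasDerivAt s h1
  have hcont : Continuous fun s : ℝ => fderiv ℝ F (y + s • w) w := by fun_prop
  have h := intervalIntegral.integral_eq_sub_of_hasDerivAt (a := 0) (b := 1)
    (fun s _ => hd s) (hcont.intervalIntegrable _ _)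
  simp only [one_smul, zero_smul, add_zero] at h
  rw [← h, intervalIntegral.integral_of_le zero_le_one]
  refine (enorm_integral_le_lintegral_enorm _).trans ?_
  refine (lintegral_mono_set Ioc_subset_Icc_self).trans ?_
  refine lintegral_mono fun s => ?_
  rw [mul_comm]
  exact ContinuousLinearMap.le_opENorm _ _

lemma mz_transl {F : E → ℝ} (hF : ContDiff ℝ 1 F) (x w : E) {r : ℝ} (hw : ‖w‖ ≤ 2 * r) :
    ∫⁻ y in closedBall x r, ‖F (y + w) - F y‖ₑ ∂ν
      ≤ ENNReal.ofReal (2 * r) * ∫⁻ y in closedBall x (3 * r), ‖fderiv ℝ F y‖ₑ ∂ν := by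
  have hc : Continuous (fderiv ℝ F) := hF.continuous_fderiv (by norm_num)
  have hwe : ‖w‖ₑ ≤ ENNReal.ofReal (2 * r) := by
    rw [← ofReal_norm]; exact ENNReal.ofReal_le_ofReal hw
  calc ∫⁻ y in closedBall x r, ‖F (y + w) - F y‖ₑ ∂ν
      ≤ ∫⁻ y in closedBall x r, (∫⁻ s in Icc (0:ℝ) 1, ‖w‖ₑ * ‖fderiv ℝ F (y + s • w)‖ₑ) ∂ν :=
        lintegral_mono fun y => mz_segment hF y w
    _ = ∫⁻ s in Icc (0:ℝ) 1, ∫⁻ y in closedBall x r, ‖w‖ₑ * ‖fderiv ℝ F (y + s • w)‖ₑ ∂ν := by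
        apply lintegral_lintegral_swap
        apply Measurable.aemeasurable
        apply Measurable.const_mul
        apply Continuous.measurable
        fun_prop
    _ ≤ ∫⁻ s in Icc (0:ℝ) 1, ENNReal.ofReal (2 * r) *
          ∫⁻ y in closedBall x (3 * r), ‖fderiv ℝ F y‖ₑ ∂ν := by
        refine setLIntegral_mono' measurableSet_Icc fun s hs => ?_
        rw [lintegral_const_mul _ (by apply Continuous.measurable; fun_prop)]
        refine mul_le_mul' hwe ?_
        rw [← lintegral_indicator isClosed_closedBall.measurableSet,
          ← lintegral_indicator isClosed_closedBall.measurableSet]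
        rw [← lintegral_add_right_eq_self
          ((closedBall x (3 * r)).indicator fun y => ‖fderiv ℝ F y‖ₑ) (s • w)]
        refine lintegral_mono fun y => ?_
        by_cases hy : y ∈ closedBall x r
        swap
        · simp [hy]
        rw [indicator_of_mem hy, indicator_of_mem]
        rw [mem_closedBall, dist_eq_norm] at hy ⊢
        have h1 : ‖s • w‖ ≤ 2 * r := by
          rw [norm_smul, Real.norm_of_nonneg hs.1]
          nlinarith [hs.1, hs.2, norm_nonneg w]
        calc ‖y + s • w - x‖ = ‖(y - x) + s • w‖ := by congr 1; abel
          _ ≤ ‖y - x‖ + ‖s • w‖ := norm_add_le _ _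
          _ ≤ 3 * r := by linarith
    _ = _ := by simp

/-- A rough relative isoperimetric inequality. -/
lemma mz_prod {F : E → ℝ} (hF : ContDiff ℝ 1 F) (x : E) {r : ℝ} {A Z : Set E}
    (hA : MeasurableSet A) (hZ : MeasurableSet Z) (hAB : A ⊆ closedBall x r)
    (hZB : Z ⊆ closedBall x r) (hFA : ∀ y ∈ A, F y = 1) (hFZ : ∀ y ∈ Z, F y = 0) :
    ν A * ν Z ≤ ν (closedBall 0 (2 * r)) * (ENNReal.ofReal (2 * r) *
      ∫⁻ y in closedBall x (3 * r), ‖fderiv ℝ F y‖ₑ ∂ν) := by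
  set I := ENNReal.ofReal (2 * r) * ∫⁻ y in closedBall x (3 * r), ‖fderiv ℝ F y‖ₑ ∂ν with hI
  have mA : Measurable (A.indicator (1 : E → ℝ≥0∞)) := measurable_one.indicator hA
  have mZ : Measurable (Z.indicator (1 : E → ℝ≥0∞)) := measurable_one.indicator hZ
  have h1 : ν A * ν Z = ∫⁻ y, ∫⁻ w, A.indicator (1 : E → ℝ≥0∞) y *
      Z.indicator (1 : E → ℝ≥0∞) (y + w) ∂ν ∂ν := by
    have : ∀ y, ∫⁻ w, A.indicator (1 : E → ℝ≥0∞) y * Z.indicator (1 : E → ℝ≥0∞) (y + w) ∂ν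
        = A.indicator (1 : E → ℝ≥0∞) y * ν Z := by
      intro y
      rw [lintegral_const_mul _ (by fun_prop), lintegral_add_left_eq_self, lintegral_indicator_one hZ]
    simp_rw [this]
    rw [lintegral_mul_const _ mA, lintegral_indicator_one hA]
  rw [h1, lintegral_lintegral_swap (by
    apply Measurable.aemeasurable
    exact (mA.comp measurable_fst).mul (mZ.comp (measurable_fst.add measurable_snd)))]
  have h2 : ∀ w, ∫⁻ y, A.indicator (1 : E → ℝ≥0∞) y * Z.indicator (1 : E → ℝ≥0∞) (y + w) ∂ν
      ≤ (closedBall (0:E) (2 * r)).indicator (fun _ => I) w := by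
    intro w
    by_cases hw : w ∈ closedBall (0:E) (2 * r)
    · rw [indicator_of_mem hw]
      refine le_trans ?_ (mz_transl ν hF x w (by simpa using hw))
      rw [← lintegral_indicator isClosed_closedBall.measurableSet]
      refine lintegral_mono fun y => ?_
      by_cases hyA : y ∈ A
      · by_cases hyZ : y + w ∈ Z
        · rw [indicator_of_mem (hAB hyA)]
          simp [hyA, hyZ, hFA _ hyA, hFZ _ hyZ]
        · simp [hyZ]
      · simp [hyA]
    · rw [indicator_of_notMem hw, nonpos_iff_eq_zero]
      convert lintegral_zero with y
      by_cases hyA : y ∈ A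
      · by_cases hyZ : y + w ∈ Z
        · exfalso
          apply hw
          have a := hAB hyA
          have b := hZB hyZ
          rw [mem_closedBall, dist_eq_norm] at a b
          rw [mem_closedBall, dist_zero_right]
          calc ‖w‖ = ‖(y + w - x) - (y - x)‖ := by congr 1; abel
            _ ≤ _ := norm_sub_le _ _
            _ ≤ 2 * r := by linarith
        · simp [hyZ]
      · simp [hyA]
  refine (lintegral_mono h2).trans ?_
  rw [lintegral_indicator isClosed_closedBall.measurableSet, setLIntegral_const, mul_comm]

lemma mz_radius (hd : 1 ≤ Module.finrank ℝ E) {F : E → ℝ} (hF : ContDiff ℝ 1 F) {A Z : Set E}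
    (hA : MeasurableSet A) (hZ : MeasurableSet Z) (hFA : ∀ y ∈ A, F y = 1)
    (hFZ : ∀ y ∈ Z, F y = 0) (hAfin : ν A ≠ ⊤) {r₀ : ℝ} (hr₀ : 0 < r₀)
    (hmid : 4 * ν (A ∪ Z)ᶜ ≤ ν (closedBall 0 r₀)) :
    ∃ R : ℝ, ∀ x, closedBall x r₀ ⊆ A → ∃ r : ℝ, 0 < r ∧ r ≤ R ∧
      ENNReal.ofReal (r ^ (Module.finrank ℝ E - 1)) ≤
        (16 * 4 ^ Module.finrank ℝ E / ν (ball 0 1)) *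
          ∫⁻ y in closedBall x (3 * r), ‖fderiv ℝ F y‖ₑ ∂ν := by
  set d := Module.finrank ℝ E with hdd
  set om := ν (ball (0:E) 1) with hom
  have hom0 : om ≠ 0 := (measure_ball_pos ν 0 one_pos).ne'
  have homt : om ≠ ⊤ := measure_ball_lt_top.ne
  have hb : ∀ (x : E) (r : ℝ), 0 ≤ r → ν (closedBall x r) = ENNReal.ofReal (r ^ d) * om :=
    fun x r hr => Measure.addHaar_closedBall ν x hr
  have hbt : ∀ (x : E) (r : ℝ), ν (closedBall x r) ≠ ⊤ := fun x r => measure_closedBall_lt_top.ne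
  have hdouble : ∀ (x y : E) (r : ℝ), 0 ≤ r →
      ν (closedBall x (2 * r)) = 2 ^ d * ν (closedBall y r) := by
    intro x y r hr
    rw [hb _ _ hr, hb _ _ (by positivity), mul_pow, ENNReal.ofReal_mul (by positivity), mul_assoc,
      ENNReal.ofReal_pow (by norm_num)]
    simp
  obtain ⟨N, hN⟩ : ∃ N : ℕ, ∀ x : E, 2 * ν A < ν (closedBall x (2 ^ N * r₀)) := by
    obtain ⟨N, hN⟩ := pow_unbounded_of_one_lt ((max 1 (2 * ν A / om).toReal) / r₀)
      (one_lt_two : (1:ℝ) < 2)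
    rw [div_lt_iff₀ hr₀] at hN
    refine ⟨N, fun x => ?_⟩
    rw [hb _ _ (by positivity)]
    set ρ := 2 ^ N * r₀
    have h1 : 1 ≤ ρ := (le_max_left _ _).trans hN.le
    have h2 : (2 * ν A / om).toReal < ρ := (le_max_right _ _).trans_lt hN
    have h3 : ρ ≤ ρ ^ d := le_self_pow₀ h1 (by omega)
    have hfin : 2 * ν A / om ≠ ⊤ :=
      ENNReal.div_ne_top (ENNReal.mul_ne_top (by norm_num) hAfin) hom0
    have h4 : 2 * ν A / om < ENNReal.ofReal (ρ ^ d) := by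
      rw [ENNReal.lt_ofReal_iff_toReal_lt hfin]; linarith
    rwa [ENNReal.div_lt_iff (Or.inl hom0) (Or.inl homt)] at h4
  refine ⟨2 ^ N * r₀, fun x hx => ?_⟩
  classical
  have hex : ∃ i : ℕ, 2 * ν (A ∩ closedBall x (2 ^ i * r₀)) < ν (closedBall x (2 ^ i * r₀)) :=
    ⟨N, lt_of_le_of_lt (by gcongr; exact inter_subset_left) (hN x)⟩
  have hiN : Nat.find hex ≤ N := Nat.find_min' hex
    (lt_of_le_of_lt (by gcongr; exact inter_subset_left) (hN x))
  have hi := Nat.find_spec hex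
  have hmin : ∀ m, m < Nat.find hex → _ := fun m hm => Nat.find_min hex hm
  generalize Nat.find hex = i at hiN hi hmin
  rcases i with _ | m
  · exfalso
    rw [pow_zero, one_mul, inter_eq_self_of_subset_right hx] at hi
    refine absurd hi (not_lt.2 ?_)
    rw [two_mul]; exact le_self_add
  have hm := not_lt.1 (hmin m (Nat.lt_succ_self m))
  set ρ : ℝ := 2 ^ m * r₀ with hρ
  have hρ0 : 0 < ρ := by positivity
  have hr : (2:ℝ) ^ (m + 1) * r₀ = 2 * ρ := by rw [hρ]; ring
  rw [hr] at hi
  set r := 2 * ρ with hrr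
  have hr0 : 0 < r := by positivity
  refine ⟨r, hr0, ?_, ?_⟩
  · rw [← hr]
    gcongr
    norm_num
  set I := ∫⁻ y in closedBall x (3 * r), ‖fderiv ℝ F y‖ₑ ∂ν
  set B := closedBall x r with hB
  have key := mz_prod ν hF x (r := r) (A := A ∩ B) (Z := Z ∩ B)
    (hA.inter isClosed_closedBall.measurableSet) (hZ.inter isClosed_closedBall.measurableSet)
    inter_subset_right inter_subset_right (fun y hy => hFA y hy.1) (fun y hy => hFZ y hy.1)
  have hr₀r : r₀ ≤ r := by
    rw [hrr, hρ]
    have : (1:ℝ) ≤ 2 ^ m := one_le_pow₀ (by norm_num)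
    nlinarith
  have hbr : ν (closedBall 0 r₀) ≤ ν B := by
    rw [hB, hb _ _ hr₀.le, hb _ _ hr0.le]; gcongr
  have hAlow : ν (closedBall x ρ) ≤ 2 * ν (A ∩ B) := by
    refine hm.trans ?_
    gcongr 2 * ν (A ∩ ?_)
    exact closedBall_subset_closedBall (by linarith)
  have hZlow : ν B ≤ 4 * ν (Z ∩ B) := by
    have h1 : ν B ≤ ν (A ∩ B) + ν (Z ∩ B) + ν (A ∪ Z)ᶜ := by
      refine le_trans (measure_mono ?_) ((measure_union_le _ _).trans
        (add_le_add_left (measure_union_le _ _) _))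
      intro y hy
      by_cases h1 : y ∈ A <;> by_cases h2 : y ∈ Z <;> simp [h1, h2, hy]
    have h2 : 4 * ν B ≤ 3 * ν B + 4 * ν (Z ∩ B) := by
      calc 4 * ν B ≤ 4 * (ν (A ∩ B) + ν (Z ∩ B) + ν (A ∪ Z)ᶜ) := by gcongr
        _ = 2 * (2 * ν (A ∩ B)) + 4 * ν (Z ∩ B) + 4 * ν (A ∪ Z)ᶜ := by ring
        _ ≤ 2 * ν B + 4 * ν (Z ∩ B) + ν B := by gcongr; exact hmid.trans hbr
        _ = _ := by ring
    have h3 : 3 * ν B + ν B ≤ 3 * ν B + 4 * ν (Z ∩ B) := by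
      convert h2 using 1; ring
    exact (ENNReal.add_le_add_iff_left (ENNReal.mul_ne_top (by norm_num) (hbt _ _))).1 h3
  have hB0 : ν B ≠ 0 := (measure_closedBall_pos ν x hr0).ne'
  have h5 : ν B * ν (closedBall x ρ) ≤ ν B * (8 * 2 ^ d * ENNReal.ofReal (2 * r) * I) := by
    calc ν B * ν (closedBall x ρ) ≤ (4 * ν (Z ∩ B)) * (2 * ν (A ∩ B)) := by gcongr
      _ = 8 * (ν (A ∩ B) * ν (Z ∩ B)) := by ring
      _ ≤ 8 * (ν (closedBall 0 (2 * r)) * (ENNReal.ofReal (2 * r) * I)) := by gcongr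
      _ = _ := by rw [hdouble 0 x r hr0.le]; ring
  have h6 := (ENNReal.mul_le_mul_iff_right hB0 (hbt _ _)).1 h5
  have h7 : ENNReal.ofReal r * (ENNReal.ofReal (r ^ (d - 1)) * om) ≤
      ENNReal.ofReal r * (16 * 4 ^ d * I) := by
    calc ENNReal.ofReal r * (ENNReal.ofReal (r ^ (d - 1)) * om) = ν B := by
          rw [hB, hb _ _ hr0.le, ← mul_assoc, ← ENNReal.ofReal_mul hr0.le, ← pow_succ',
            Nat.sub_add_cancel hd]
      _ = 2 ^ d * ν (closedBall x ρ) := hdouble _ _ _ hρ0.le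
      _ ≤ 2 ^ d * (8 * 2 ^ d * ENNReal.ofReal (2 * r) * I) := by gcongr
      _ = _ := by
          rw [ENNReal.ofReal_mul (by norm_num), show (4:ℝ≥0∞) = 2 * 2 by norm_num, mul_pow]
          rw [ENNReal.ofReal_ofNat]
          ring
  have h8 := (ENNReal.mul_le_mul_iff_right (by simpa using hr0) ENNReal.ofReal_ne_top).1 h7
  rw [← ENNReal.le_div_iff_mul_le (Or.inl hom0) (Or.inl homt)] at h8
  refine h8.trans (le_of_eq ?_)
  rw [div_eq_mul_inv, div_eq_mul_inv]; ring

/-- Capacity (boxing) estimate. -/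
lemma mz_weak (hd : 1 ≤ Module.finrank ℝ E) {F : E → ℝ} (hF : ContDiff ℝ 1 F) {A Z : Set E}
    (hA : MeasurableSet A) (hZ : MeasurableSet Z) (hFA : ∀ y ∈ A, F y = 1)
    (hFZ : ∀ y ∈ Z, F y = 0) (hAfin : ν A ≠ ⊤) {r₀ : ℝ} (hr₀ : 0 < r₀)
    (hmid : 4 * ν (A ∪ Z)ᶜ ≤ ν (closedBall 0 r₀)) (S : Set E)
    (hS : ∀ x ∈ S, closedBall x r₀ ⊆ A) (μ : Measure E) (K : ℝ) (hK : 0 ≤ K)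
    (hμ : ∀ (x : E) (r : ℝ), 0 < r →
      μ (closedBall x r) ≤ ENNReal.ofReal (K * r ^ (Module.finrank ℝ E - 1))) :
    μ S ≤ ENNReal.ofReal K * (15 ^ (Module.finrank ℝ E - 1) *
      (16 * 4 ^ Module.finrank ℝ E / ν (ball 0 1))) * ∫⁻ y, ‖fderiv ℝ F y‖ₑ ∂ν := by
  obtain ⟨R, hR⟩ := mz_radius ν hd hF hA hZ hFA hFZ hAfin hr₀ hmid
  set d := Module.finrank ℝ E with hdd
  set C := 16 * 4 ^ d / ν (ball (0:E) 1)
  have : ∀ x : E, ∃ r : ℝ, x ∈ S → 0 < r ∧ r ≤ R ∧ ENNReal.ofReal (r ^ (d - 1)) ≤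
        C * ∫⁻ y in closedBall x (3 * r), ‖fderiv ℝ F y‖ₑ ∂ν := by
    intro x
    by_cases hx : x ∈ S
    · obtain ⟨r, hr⟩ := hR x (hS x hx)
      exact ⟨r, fun _ => hr⟩
    · exact ⟨0, fun h => absurd h hx⟩
  choose r hr using this
  obtain ⟨u, huS, hdisj, hcov⟩ :=
    Vitali.exists_disjoint_subfamily_covering_enlargement_closedBall S (fun x : E => x)
      (fun x => 3 * r x) (3 * R) (fun x hx => by linarith [(hr x hx).2.1]) 5 (by norm_num)
  have hcount : u.Countable := hdisj.countable_of_nonempty_interior fun x hx => by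
    have := (hr x (huS hx)).1
    exact ⟨x, ball_subset_interior_closedBall (mem_ball_self (by positivity))⟩
  calc μ S ≤ μ (⋃ x ∈ u, closedBall x (5 * (3 * r x))) := by
        refine measure_mono fun x hx => ?_
        obtain ⟨b, hb, hsub⟩ := hcov x hx
        have := (hr x hx).1
        exact mem_biUnion hb (hsub (mem_closedBall_self (by positivity)))
    _ ≤ ∑' x : u, μ (closedBall (x:E) (5 * (3 * r x))) := measure_biUnion_le μ hcount _
    _ ≤ ∑' x : u, ENNReal.ofReal K * (15 ^ (d - 1) * C) *
          ∫⁻ y in closedBall (x:E) (3 * r x), ‖fderiv ℝ F y‖ₑ ∂ν := by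
        refine ENNReal.tsum_le_tsum fun x => ?_
        obtain ⟨h0, -, h2⟩ := hr x (huS x.2)
        refine (hμ _ _ (by positivity)).trans ?_
        rw [ENNReal.ofReal_mul hK, show 5 * (3 * r x) = 15 * r x by ring, mul_pow,
          ENNReal.ofReal_mul (by positivity), ENNReal.ofReal_pow (by norm_num),
          ENNReal.ofReal_ofNat, mul_assoc, mul_assoc]
        gcongr
    _ = ENNReal.ofReal K * (15 ^ (d - 1) * C) *
          ∫⁻ y in ⋃ x ∈ u, closedBall (x:E) (3 * r x), ‖fderiv ℝ F y‖ₑ ∂ν := by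
        rw [ENNReal.tsum_mul_left, lintegral_biUnion hcount
          (fun _ _ => isClosed_closedBall.measurableSet) hdisj]
    _ ≤ _ := by
        gcongr
        exact Measure.restrict_le_self

lemma mz_cut : ∃ (s : ℝ → ℝ) (M : ℝ≥0), ContDiff ℝ 1 s ∧ (∀ u ≤ 0, s u = 0) ∧
    (∀ u, 1 ≤ u → s u = 1) ∧
    ∀ u, ‖deriv s u‖ₑ ≤ (Icc (0:ℝ) 1).indicator (fun _ => (M : ℝ≥0∞)) u := by
  have hs : ContDiff ℝ 1 Real.smoothTransition := Real.smoothTransition.contDiff (n := 1)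
  have hc : Continuous (deriv Real.smoothTransition) := hs.continuous_deriv (by norm_num)
  obtain ⟨M, hM⟩ := (isCompact_Icc (a := (0:ℝ)) (b := 1)).exists_bound_of_continuousOn
    hc.continuousOn
  refine ⟨Real.smoothTransition, M.toNNReal, hs, fun u hu => Real.smoothTransition.zero_of_nonpos hu,
    fun u hu => Real.smoothTransition.one_of_one_le hu, fun u => ?_⟩
  by_cases hu : u ∈ Icc (0:ℝ) 1
  · rw [indicator_of_mem hu, ← ofReal_norm]
    exact ENNReal.ofReal_le_ofReal (hM u hu)
  · rw [indicator_of_notMem hu]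
    have : deriv Real.smoothTransition u = 0 := by
      rw [mem_Icc, not_and_or, not_le, not_le] at hu
      rcases hu with hu | hu
      · have : Real.smoothTransition =ᶠ[nhds u] fun _ => 0 := by
          filter_upwards [Iio_mem_nhds hu] with v hv
          exact Real.smoothTransition.zero_of_nonpos (le_of_lt hv)
        rw [this.deriv_eq, deriv_const]
      · have : Real.smoothTransition =ᶠ[nhds u] fun _ => 1 := by
          filter_upwards [Ioi_mem_nhds hu] with v hv
          exact Real.smoothTransition.one_of_one_le (le_of_lt hv)
        rw [this.deriv_eq, deriv_const]
    simp [this]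

lemma mz_level (hd : 1 ≤ Module.finrank ℝ E) {φ : E → ℝ} (hφ : ContDiff ℝ 1 φ)
    (hsupp : HasCompactSupport φ) {s : ℝ → ℝ} (hs : ContDiff ℝ 1 s) (hs0 : ∀ u ≤ 0, s u = 0)
    (hs1 : ∀ u, 1 ≤ u → s u = 1) (μ : Measure E) (K : ℝ) (hK : 0 ≤ K)
    (hμ : ∀ (x : E) (r : ℝ), 0 < r →
      μ (closedBall x r) ≤ ENNReal.ofReal (K * r ^ (Module.finrank ℝ E - 1)))
    {t : ℝ} (ht : 0 < t) :
    μ {x | t < φ x} ≤ Filter.liminf (fun j : ℕ => ENNReal.ofReal K * (15 ^ (Module.finrank ℝ E - 1) *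
      (16 * 4 ^ Module.finrank ℝ E / ν (ball 0 1))) *
      ∫⁻ x, ‖deriv s ((φ x - t) * (j + 1) + 1)‖ₑ * ENNReal.ofReal (j + 1) * ‖fderiv ℝ φ x‖ₑ ∂ν)
      Filter.atTop := by
  have hcφ := hφ.continuous
  have hun : {x | t < φ x} = ⋃ m : ℕ, {x | t + 1 / ((m:ℝ) + 1) ≤ φ x} := by
    ext x
    simp only [mem_ofPred_eq, mem_iUnion]
    constructor
    · intro h
      obtain ⟨m, hm⟩ := exists_nat_one_div_lt (sub_pos.2 h)
      exact ⟨m, by linarith⟩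
    · rintro ⟨m, hm⟩
      have : 0 < 1 / ((m:ℝ) + 1) := by positivity
      linarith
  have hmono : Monotone fun m : ℕ => {x | t + 1 / ((m:ℝ) + 1) ≤ φ x} := by
    intro a b hab x hx
    simp only [mem_ofPred_eq] at hx ⊢
    have : 1 / ((b:ℝ) + 1) ≤ 1 / ((a:ℝ) + 1) := by gcongr
    linarith
  rw [hun, hmono.measure_iUnion]
  refine iSup_le fun m => ?_
  have huc : UniformContinuous φ := hsupp.uniformContinuous_of_continuous hcφ
  have hδ : 0 < 1 / ((m:ℝ) + 1) := by positivity
  obtain ⟨ε, hε, hεφ⟩ := Metric.uniformContinuous_iff.1 huc _ hδ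
  -- the superlevel set has finite measure
  have hfin : ∀ τ : ℝ, 0 < τ → ν {x | τ ≤ φ x} ≠ ⊤ := by
    intro τ hτ
    refine ((measure_mono ?_).trans_lt hsupp.isCompact.measure_lt_top).ne
    intro x hx
    apply subset_tsupport
    simp only [mem_ofPred_eq] at hx
    exact (hτ.trans_le hx).ne'
  set mid : ℕ → Set E := fun j => {x | t - 1 / ((j:ℝ) + 1) < φ x ∧ φ x < t} with hmiddef
  have hmidmeas : ∀ j, MeasurableSet (mid j) := fun j =>
    (measurableSet_lt measurable_const hcφ.measurable).inter
      (measurableSet_lt hcφ.measurable measurable_const)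
  have hanti : Antitone mid := by
    intro a b hab x hx
    refine ⟨?_, hx.2⟩
    have : 1 / ((b:ℝ) + 1) ≤ 1 / ((a:ℝ) + 1) := by gcongr
    have := hx.1
    linarith
  have hinter : ⋂ j, mid j = ∅ := by
    ext x
    simp only [mem_iInter, mem_empty_iff_false, iff_false]
    intro h
    obtain ⟨j, hj⟩ := exists_nat_one_div_lt (sub_pos.2 (h 0).2)
    have := (h j).1
    linarith
  have htend := tendsto_measure_iInter_atTop (μ := ν) (s := mid)
    (fun j => (hmidmeas j).nullMeasurableSet) hanti (by
      obtain ⟨j, hj⟩ := exists_nat_one_div_lt ht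
      refine ⟨j, ((measure_mono ?_).trans_lt
        (hfin (t - 1 / ((j:ℝ) + 1)) (by linarith)).lt_top).ne⟩
      intro x hx
      exact hx.1.le)
  rw [hinter, measure_empty] at htend
  have hpos : 0 < ν (closedBall (0:E) (ε / 2)) / 4 :=
    ENNReal.div_pos (measure_closedBall_pos ν _ (by positivity)).ne' (by norm_num)
  refine Filter.le_liminf_of_le (by isBoundedDefault) ?_
  filter_upwards [htend.eventually (gt_mem_nhds hpos)] with j hj
  simp only [Function.comp] at hj
  have hj1 : (0:ℝ) < (j:ℝ) + 1 := by positivity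
  set F : E → ℝ := fun x => s ((φ x - t) * (j + 1) + 1) with hFdef
  have hF : ContDiff ℝ 1 F := by
    apply hs.comp
    fun_prop
  have hw := mz_weak ν hd hF (A := {x | t ≤ φ x}) (Z := {x | φ x ≤ t - 1 / ((j:ℝ) + 1)})
    (measurableSet_le measurable_const hcφ.measurable)
    (measurableSet_le hcφ.measurable measurable_const)
    (fun y hy => hs1 _ (by
      simp only [mem_ofPred_eq] at hy
      have : 0 ≤ (φ y - t) * ((j:ℝ) + 1) := mul_nonneg (by linarith) hj1.le
      linarith))
    (fun y hy => hs0 _ (by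
      simp only [mem_ofPred_eq] at hy
      have : (φ y - t) * ((j:ℝ) + 1) ≤ (-(1 / ((j:ℝ) + 1))) * ((j:ℝ) + 1) := by
        gcongr
        linarith
      have h2 : (-(1 / ((j:ℝ) + 1))) * ((j:ℝ) + 1) = -1 := by field_simp
      linarith))
    (hfin t ht) (r₀ := ε / 2) (by positivity) (by
      have : ({x | t ≤ φ x} ∪ {x | φ x ≤ t - 1 / ((j:ℝ) + 1)})ᶜ = mid j := by
        ext x
        simp only [hmiddef, mem_compl_iff, mem_union, mem_ofPred_eq, not_or, not_le]
        tauto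
      rw [this]
      calc 4 * ν (mid j) ≤ 4 * (ν (closedBall (0:E) (ε / 2)) / 4) := by gcongr
        _ = _ := ENNReal.mul_div_cancel (by norm_num) (by norm_num))
    {x | t + 1 / ((m:ℝ) + 1) ≤ φ x} (by
      intro x hx y hy
      simp only [mem_ofPred_eq] at hx ⊢
      have h1 : dist y x < ε := lt_of_le_of_lt hy (by linarith)
      have h2 := hεφ h1
      rw [Real.dist_eq, abs_lt] at h2
      linarith) μ K hK hμ
  refine hw.trans (le_of_eq ?_)
  congr 1
  refine lintegral_congr fun x => ?_
  have hder : HasFDerivAt F ((deriv s ((φ x - t) * (j + 1) + 1)) •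
      (((j:ℝ) + 1) • fderiv ℝ φ x)) x := by
    have h1 : HasFDerivAt (fun x => (φ x - t) * ((j:ℝ) + 1) + 1) (((j:ℝ) + 1) • fderiv ℝ φ x) x :=
      (((hφ.differentiable (by norm_num) x).hasFDerivAt.sub_const t).mul_const _).add_const _
    exact ((hs.differentiable (by norm_num)) _).hasDerivAt.comp_hasFDerivAt x h1
  rw [hder.fderiv, enorm_smul, enorm_smul, ← mul_assoc, Real.enorm_of_nonneg hj1.le]

lemma mz_main (hd : 1 ≤ Module.finrank ℝ E) : ∃ C : ℝ≥0, ∀ (μ : Measure E) (K : ℝ), 0 ≤ K →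
    (∀ (x : E) (r : ℝ), 0 < r →
      μ (closedBall x r) ≤ ENNReal.ofReal (K * r ^ (Module.finrank ℝ E - 1))) →
    ∀ φ : E → ℝ, ContDiff ℝ 1 φ → HasCompactSupport φ →
      ∫⁻ x, ENNReal.ofReal (φ x) ∂μ ≤ C * ENNReal.ofReal K * ∫⁻ x, ‖fderiv ℝ φ x‖ₑ ∂ν := by
  obtain ⟨s, M, hs, hs0, hs1, hsM⟩ := mz_cut
  set c : ℝ≥0∞ := 15 ^ (Module.finrank ℝ E - 1) *
      (16 * 4 ^ Module.finrank ℝ E / ν (ball (0:E) 1)) with hc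
  have hct : c ≠ ⊤ := by
    refine ENNReal.mul_ne_top (by finiteness) (ENNReal.div_ne_top (by finiteness) ?_)
    exact (measure_ball_pos ν 0 one_pos).ne'
  refine ⟨c.toNNReal * M, fun μ K hK hμ φ hφ hsupp => ?_⟩
  have hcφ := hφ.continuous
  have hcd : Continuous (fderiv ℝ φ) := hφ.continuous_fderiv (by norm_num)
  have hcs : Continuous (deriv s) := hs.continuous_deriv (by norm_num)
  have hmeas : ∀ j : ℕ, Measurable fun p : ℝ × E =>
      ‖deriv s ((φ p.2 - p.1) * (j + 1) + 1)‖ₑ * ENNReal.ofReal (j + 1) * ‖fderiv ℝ φ p.2‖ₑ := by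
    intro j
    have a1 : Continuous fun p : ℝ × E => ‖deriv s ((φ p.2 - p.1) * (j + 1) + 1)‖ₑ := by fun_prop
    have a2 : Continuous fun p : ℝ × E => ‖fderiv ℝ φ p.2‖ₑ := by fun_prop
    exact (a1.measurable.mul_const _).mul a2.measurable
  have h0 : ∫⁻ x, ENNReal.ofReal (φ x) ∂μ = ∫⁻ t in Ioi (0:ℝ), μ {x | t < φ x} := by
    have h := lintegral_eq_lintegral_meas_lt μ (f := fun x => max (φ x) 0)
      (Filter.Eventually.of_forall fun x => le_max_right _ _)
      (hcφ.measurable.max measurable_const).aemeasurable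
    have h' : ∀ x, ENNReal.ofReal (max (φ x) 0) = ENNReal.ofReal (φ x) := by
      intro x
      rw [ENNReal.ofReal_max]; simp
    simp_rw [h'] at h
    rw [h]
    refine setLIntegral_congr_fun measurableSet_Ioi fun t ht => ?_
    have ht' : ¬ t < 0 := not_lt.2 (le_of_lt ht)
    simp [ht']
  have hj : ∀ j : ℕ, ∫⁻ t : ℝ, ENNReal.ofReal K * c *
      (∫⁻ x, ‖deriv s ((φ x - t) * (j + 1) + 1)‖ₑ * ENNReal.ofReal (j + 1) * ‖fderiv ℝ φ x‖ₑ ∂ν)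
      ≤ ENNReal.ofReal K * c * (M * ∫⁻ x, ‖fderiv ℝ φ x‖ₑ ∂ν) := by
    intro j
    have hj1 : (0:ℝ) < (j:ℝ) + 1 := by positivity
    rw [lintegral_const_mul _ (hmeas j).lintegral_prod_right']
    gcongr
    rw [lintegral_lintegral_swap (hmeas j).aemeasurable,
      ← lintegral_const_mul _ (by apply Continuous.measurable; fun_prop)]
    refine lintegral_mono fun x => ?_
    have a1 : Continuous fun t : ℝ => ‖deriv s ((φ x - t) * (j + 1) + 1)‖ₑ := by fun_prop
    dsimp only
    rw [lintegral_mul_const _ (a1.measurable.mul_const _)]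
    gcongr
    calc ∫⁻ t : ℝ, ‖deriv s ((φ x - t) * (j + 1) + 1)‖ₑ * ENNReal.ofReal (j + 1)
        ≤ ∫⁻ t : ℝ, (Icc (φ x) (φ x + 1 / ((j:ℝ) + 1))).indicator
            (fun _ => (M:ℝ≥0∞) * ENNReal.ofReal (j + 1)) t := by
          refine lintegral_mono fun t => ?_
          have h := hsM ((φ x - t) * (j + 1) + 1)
          by_cases hu : (φ x - t) * ((j:ℝ) + 1) + 1 ∈ Icc (0:ℝ) 1
          · rw [indicator_of_mem hu] at h
            rw [indicator_of_mem]
            · gcongr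
            · constructor
              · by_contra hlt
                have : 0 < (φ x - t) * ((j:ℝ) + 1) := mul_pos (by linarith) hj1
                linarith [hu.2]
              · have h3 : (t - φ x) * ((j:ℝ) + 1) ≤ 1 := by linarith [hu.1]
                rw [← le_div_iff₀ hj1] at h3
                linarith
          · rw [indicator_of_notMem hu, nonpos_iff_eq_zero] at h
            simp [h]
      _ = M * (ENNReal.ofReal (j + 1) * ENNReal.ofReal (1 / ((j:ℝ) + 1))) := by
          rw [lintegral_indicator measurableSet_Icc, setLIntegral_const, Real.volume_Icc,
            add_sub_cancel_left, mul_assoc]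
      _ = M := by
          rw [← ENNReal.ofReal_mul hj1.le, mul_one_div_cancel hj1.ne']; simp
  rw [h0]
  calc ∫⁻ t in Ioi (0:ℝ), μ {x | t < φ x}
      ≤ ∫⁻ t in Ioi (0:ℝ), Filter.liminf (fun j : ℕ => ENNReal.ofReal K * c *
      (∫⁻ x, ‖deriv s ((φ x - t) * (j + 1) + 1)‖ₑ * ENNReal.ofReal (j + 1) * ‖fderiv ℝ φ x‖ₑ ∂ν))
        Filter.atTop :=
        setLIntegral_mono' measurableSet_Ioi fun t ht =>
          mz_level ν hd hφ hsupp hs hs0 hs1 μ K hK hμ ht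
    _ ≤ ∫⁻ t : ℝ, Filter.liminf (fun j : ℕ => ENNReal.ofReal K * c *
      (∫⁻ x, ‖deriv s ((φ x - t) * (j + 1) + 1)‖ₑ * ENNReal.ofReal (j + 1) * ‖fderiv ℝ φ x‖ₑ ∂ν))
        Filter.atTop := setLIntegral_le_lintegral _ _
    _ ≤ Filter.liminf (fun j : ℕ => ∫⁻ t : ℝ, ENNReal.ofReal K * c *
      (∫⁻ x, ‖deriv s ((φ x - t) * (j + 1) + 1)‖ₑ * ENNReal.ofReal (j + 1) * ‖fderiv ℝ φ x‖ₑ ∂ν))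
        Filter.atTop :=
        lintegral_liminf_le fun j => (hmeas j).lintegral_prod_right'.const_mul _
    _ ≤ ENNReal.ofReal K * c * (M * ∫⁻ x, ‖fderiv ℝ φ x‖ₑ ∂ν) :=
        (Filter.liminf_le_liminf (Filter.Eventually.of_forall hj)).trans (by simp)
    _ = _ := by
        rw [ENNReal.coe_mul, ENNReal.coe_toNNReal hct]; ring

end MZ

/-- **Theorem 2.8 (Meyers–Ziemer inequality).**
If `μ` is a positive Radon measure on `ℝⁿ` with
`K(μ) = sup_{B_r(x)} μ(B_r(x))/r^{n-1} < ∞`, then there is `c(n)` such that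
`|∫ φ dμ| ≤ c(n) K(μ) ∫ |∇φ| dx` for every `φ ∈ C¹_c(ℝⁿ)`. -/
theorem statement8 (n : ℕ) (hn : 1 ≤ n) :
    ∃ c > (0 : ℝ),
      ∀ (μ : Measure (EuclideanSpace ℝ (Fin n))) (K : ℝ), 0 ≤ K →
        (∀ (x : EuclideanSpace ℝ (Fin n)) (r : ℝ), 0 < r →
          μ (closedBall x r) ≤ ENNReal.ofReal (K * r ^ (n - 1))) →
        ∀ φ : EuclideanSpace ℝ (Fin n) → ℝ, ContDiff ℝ 1 φ → HasCompactSupport φ →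
          |∫ x, φ x ∂μ| ≤ c * K * ∫ x, ‖fderiv ℝ φ x‖ := by
  obtain ⟨C, hC⟩ := mz_main (E := EuclideanSpace ℝ (Fin n)) volume (by simpa using hn)
  refine ⟨2 * C + 1, by positivity, fun μ K hK hμ φ hφ hsupp => ?_⟩
  have hμ' : ∀ (x : EuclideanSpace ℝ (Fin n)) (r : ℝ), 0 < r → μ (closedBall x r) ≤
      ENNReal.ofReal (K * r ^ (Module.finrank ℝ (EuclideanSpace ℝ (Fin n)) - 1)) := by
    simpa using hμ
  have h1 := hC μ K hK hμ' φ hφ hsupp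
  have h2 := hC μ K hK hμ' (fun x => - φ x) hφ.neg (by exact hsupp.neg)
  have hcd : Continuous (fderiv ℝ φ) := hφ.continuous_fderiv (by norm_num)
  have hint : Integrable (fderiv ℝ φ) volume :=
    hcd.integrable_of_hasCompactSupport (hsupp.fderiv ℝ)
  have hI := ofReal_integral_norm_eq_lintegral_enorm hint
  have hI0 : 0 ≤ ∫ x, ‖fderiv ℝ φ x‖ := integral_nonneg fun x => norm_nonneg _
  have h3 : ∀ x, ‖fderiv ℝ (fun x => - φ x) x‖ₑ = ‖fderiv ℝ φ x‖ₑ := by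
    intro x
    rw [fderiv_fun_neg, enorm_neg]
  simp_rw [h3] at h2
  rw [← hI] at h1 h2
  have h4 : ‖∫ x, φ x ∂μ‖ₑ ≤ ENNReal.ofReal ((2 * C) * K * ∫ x, ‖fderiv ℝ φ x‖) := by
    calc ‖∫ x, φ x ∂μ‖ₑ ≤ ∫⁻ x, ‖φ x‖ₑ ∂μ := enorm_integral_le_lintegral_enorm _
      _ ≤ ∫⁻ x, (ENNReal.ofReal (φ x) + ENNReal.ofReal (- φ x)) ∂μ := by
          refine lintegral_mono fun x => ?_
          rcases le_total 0 (φ x) with h | h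
          · rw [Real.enorm_of_nonneg h]; exact le_self_add
          · rw [← enorm_neg, Real.enorm_of_nonneg (neg_nonneg.2 h)]; exact le_add_self
      _ = ∫⁻ x, ENNReal.ofReal (φ x) ∂μ + ∫⁻ x, ENNReal.ofReal (- φ x) ∂μ :=
          lintegral_add_left hφ.continuous.measurable.ennreal_ofReal _
      _ ≤ _ := add_le_add h1 h2
      _ = _ := by
          rw [ENNReal.ofReal_mul (by positivity), ENNReal.ofReal_mul (by positivity),
            ENNReal.ofReal_mul (by positivity), ENNReal.ofReal_coe_nnreal, ENNReal.ofReal_ofNat]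
          ring
  rw [← ofReal_norm, ENNReal.ofReal_le_ofReal_iff (by positivity), Real.norm_eq_abs] at h4
  refine h4.trans ?_
  have : 0 ≤ K * ∫ x, ‖fderiv ℝ φ x‖ := mul_nonneg hK hI0
  nlinarith
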